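/- arXiv:1012.4145 — 6 statements merged into one kernel-verified Lean document; each statement's English description precedes it below -/
import Mathlib

section
/- Let w ∈ ℝ with w ≠ 0. Then lim_{r→0⁺} b(r) · (2 i sinh(πr))^{−i w} · G_{b(r)}(i b(r) w) · e^{−π Q(r) b(r) w} = (1/2π) Γ(i w) e^{−π w/2}, where Q(r) = b(r) + b(r)^{−1} and the complex power (2 i sinh(πr))^{−iw} is principal. (Note that 2 sin(π b(r)²) = 2 i sinh(πr); this is the scalar form of the statement that the coaction kernel of the quantum plane corepresentation, G_b(ibx−ibz) e^{πQb(z−x)} (2 sin πb²)^{iz−ix}, converges after rescaling to the kernel (1/2π)Γ(ix−iz) of the classical ax+b representation R₊.) -/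
open Complex Filter Topology

/-- ζ̄_b = exp(−πi/4 − (πi/12)(b² + b^{−2})). -/
noncomputable def zetaBar (b : ℂ) : ℂ :=
  Complex.exp (-(Real.pi * Complex.I) / 4 - (Real.pi * Complex.I) / 12 * (b ^ 2 + b⁻¹ ^ 2))

/-- The quantum dilogarithm `G_b(x)`, defined for `Im(b²) > 0` by the infinite product
`ζ̄_b · ∏_{n=1}^∞ (1 − e^{2πi b⁻¹(x − n b⁻¹)}) / ∏_{n=0}^∞ (1 − e^{2πi b(x + n b)})`. -/
noncomputable def Gb (b x : ℂ) : ℂ :=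
  zetaBar b *
      (∏' n : ℕ, (1 - Complex.exp (2 * Real.pi * Complex.I * b⁻¹ * (x - (n + 1) * b⁻¹)))) /
    (∏' n : ℕ, (1 - Complex.exp (2 * Real.pi * Complex.I * b * (x + n * b))))

/-- `b(r) = e^{iπ/4} √r`, so that `b(r)² = i r`. -/
noncomputable def br (r : ℝ) : ℂ :=
  Complex.exp (Real.pi * Complex.I / 4) * (Real.sqrt r : ℂ)

/-- First-order Taylor estimate on a convex set, from a bound on the second derivative. -/
theorem Convex.norm_taylor_one_le {F F' F'' : ℂ → ℂ} {S : Set ℂ} {C : ℝ} (hS : Convex ℝ S)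
    (hF : ∀ s ∈ S, HasDerivAt F (F' s) s) (hF' : ∀ s ∈ S, HasDerivAt F' (F'' s) s)
    (hC : ∀ s ∈ S, ‖F'' s‖ ≤ C) {a b : ℂ} (ha : a ∈ S) (hb : b ∈ S) :
    ‖F b - F a - F' a * (b - a)‖ ≤ C * ‖b - a‖ ^ 2 := by
  have hC0 : 0 ≤ C := (norm_nonneg _).trans (hC a ha)
  have hsub : segment ℝ a b ⊆ S := hS.segment_subset ha hb
  have hlip : ∀ s ∈ segment ℝ a b, ‖F' s - F' a‖ ≤ C * ‖b - a‖ := fun s hs =>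
    (hS.norm_image_sub_le_of_norm_hasDerivWithin_le
      (fun s hs => (hF' s hs).hasDerivWithinAt) hC ha (hsub hs)).trans
      (mul_le_mul_of_nonneg_left (norm_sub_le_of_mem_segment hs) hC0)
  have h := (convex_segment a b).norm_image_sub_le_of_norm_hasDerivWithin_le
    (f := fun s => F s - F' a * s) (f' := fun s => F' s - F' a)
    (fun s hs => by
      have := ((hF s (hsub hs)).sub ((hasDerivAt_id s).const_mul (F' a))).hasDerivWithinAt
        (s := segment ℝ a b)
      rw [mul_one] at this
      exact this)
    hlip (left_mem_segment ℝ a b) (right_mem_segment ℝ a b)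
  calc ‖F b - F a - F' a * (b - a)‖ = ‖F b - F' a * b - (F a - F' a * a)‖ := by ring_nf
    _ ≤ _ := h
    _ = _ := by ring

/-- The logarithm of the `q`-factor `1 - q ^ s` with `q = exp (-h)`. -/
noncomputable def logOneSubExp (h : ℝ) (s : ℂ) : ℂ := Complex.log (1 - Complex.exp (-(h * s)))

theorem norm_exp_neg_ofReal_mul (h : ℝ) (s : ℂ) :
    ‖Complex.exp (-(h * s))‖ = Real.exp (-(h * s.re)) := by
  simp [Complex.norm_exp]

theorem norm_exp_neg_ofReal_mul_lt_one {h : ℝ} (hh : 0 < h) {s : ℂ} (hs : 0 < s.re) :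
    ‖Complex.exp (-(h * s))‖ < 1 := by
  rw [norm_exp_neg_ofReal_mul, Real.exp_lt_one_iff]
  nlinarith [mul_pos hh hs]

theorem one_sub_exp_mem_slitPlane {h : ℝ} (hh : 0 < h) {s : ℂ} (hs : 0 < s.re) :
    1 - Complex.exp (-(h * s)) ∈ Complex.slitPlane := by
  left
  have := (Complex.re_le_norm _).trans_lt (norm_exp_neg_ofReal_mul_lt_one hh hs)
  simpa using this

theorem exp_logOneSubExp {h : ℝ} (hh : 0 < h) {s : ℂ} (hs : 0 < s.re) :
    Complex.exp (logOneSubExp h s) = 1 - Complex.exp (-(h * s)) :=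
  Complex.exp_log (Complex.slitPlane_ne_zero (one_sub_exp_mem_slitPlane hh hs))

theorem hasDerivAt_exp_neg_ofReal_mul (h : ℝ) (s : ℂ) :
    HasDerivAt (fun s : ℂ => Complex.exp (-(h * s))) (-(h * Complex.exp (-(h * s)))) s := by
  have := ((hasDerivAt_id s).const_mul (h : ℂ)).neg.cexp
  simpa [mul_comm] using this

theorem hasDerivAt_logOneSubExp {h : ℝ} (hh : 0 < h) {s : ℂ} (hs : 0 < s.re) :
    HasDerivAt (logOneSubExp h)
      (h * Complex.exp (-(h * s)) / (1 - Complex.exp (-(h * s)))) s := by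
  have := ((hasDerivAt_exp_neg_ofReal_mul h s).const_sub 1).clog (one_sub_exp_mem_slitPlane hh hs)
  rw [neg_neg] at this
  exact this

theorem hasDerivAt_deriv_logOneSubExp {h : ℝ} (hh : 0 < h) {s : ℂ} (hs : 0 < s.re) :
    HasDerivAt (fun s : ℂ => h * Complex.exp (-(h * s)) / (1 - Complex.exp (-(h * s))))
      (-(h ^ 2 * Complex.exp (-(h * s)) / (1 - Complex.exp (-(h * s))) ^ 2)) s := by
  have h1 := hasDerivAt_exp_neg_ofReal_mul h s
  have h2 := (h1.const_mul (h : ℂ)).div (h1.const_sub 1)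
    (Complex.slitPlane_ne_zero (one_sub_exp_mem_slitPlane hh hs))
  refine h2.congr_deriv ?_
  rw [← neg_div]
  congr 1
  ring

theorem norm_deriv_deriv_logOneSubExp_le {h σ : ℝ} (hh : 0 < h) (hσ : 0 < σ) {s : ℂ}
    (hs : σ ≤ s.re) :
    ‖-((h : ℂ) ^ 2 * Complex.exp (-(h * s)) / (1 - Complex.exp (-(h * s))) ^ 2)‖ ≤ 1 / σ ^ 2 := by
  have hs0 : 0 < s.re := hσ.trans_le hs
  set t := h * s.re with ht
  have ht0 : 0 < t := mul_pos hh hs0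
  have hlow : 1 - Real.exp (-t) ≤ ‖1 - Complex.exp (-(h * s))‖ := by
    have := norm_sub_norm_le (1 : ℂ) (Complex.exp (-(h * s)))
    rwa [norm_one, norm_exp_neg_ofReal_mul] at this
  have hsinh : t * Real.exp (-(t / 2)) ≤ 1 - Real.exp (-t) := by
    have h1 : t / 2 ≤ Real.sinh (t / 2) := Real.self_le_sinh_iff.2 (by positivity)
    rw [Real.sinh_eq] at h1
    have h2 : Real.exp (t / 2) * Real.exp (-(t / 2)) = 1 := by rw [← Real.exp_add]; simp
    have h3 : Real.exp (-t) = Real.exp (-(t / 2)) * Real.exp (-(t / 2)) := by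
      rw [← Real.exp_add]; ring_nf
    nlinarith [mul_le_mul_of_nonneg_right h1 (Real.exp_pos (-(t / 2))).le]
  have hpos : 0 < t * Real.exp (-(t / 2)) := by positivity
  have hsq : t ^ 2 * Real.exp (-t) ≤ ‖1 - Complex.exp (-(h * s))‖ ^ 2 := by
    have h3 : Real.exp (-t) = Real.exp (-(t / 2)) ^ 2 := by
      rw [sq, ← Real.exp_add]; ring_nf
    rw [h3, ← mul_pow]
    exact pow_le_pow_left₀ hpos.le (hsinh.trans hlow) 2
  have hnorm : 0 < ‖1 - Complex.exp (-(h * s))‖ ^ 2 := lt_of_lt_of_le (by positivity) hsq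
  rw [norm_neg, norm_div, norm_mul, norm_pow, norm_pow, norm_exp_neg_ofReal_mul, Complex.norm_real,
    Real.norm_eq_abs, sq_abs, div_le_div_iff₀ hnorm (by positivity), one_mul]
  refine le_trans ?_ hsq
  rw [ht, mul_pow]
  have : σ ^ 2 ≤ s.re ^ 2 := pow_le_pow_left₀ hσ.le hs 2
  calc h ^ 2 * Real.exp (-(h * s.re)) * σ ^ 2 ≤ h ^ 2 * Real.exp (-(h * s.re)) * s.re ^ 2 := by
        gcongr
    _ = _ := by ring

theorem norm_logOneSubExp_taylor_le {h σ : ℝ} (hh : 0 < h) (hσ : 0 < σ) {d : ℂ} (hd : 0 ≤ d.re) :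
    ‖logOneSubExp h (σ + d) - logOneSubExp h σ -
      h * Complex.exp (-(h * σ)) / (1 - Complex.exp (-(h * σ))) * d‖ ≤ 1 / σ ^ 2 * ‖d‖ ^ 2 := by
  have := (convex_halfSpace_re_ge σ).norm_taylor_one_le (F := logOneSubExp h)
    (fun s hs => hasDerivAt_logOneSubExp hh (hσ.trans_le hs))
    (fun s hs => hasDerivAt_deriv_logOneSubExp hh (hσ.trans_le hs))
    (fun s hs => norm_deriv_deriv_logOneSubExp_le hh hσ hs)
    (a := σ) (b := σ + d) (by simp) (by simpa using hd)
  simpa using this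

/-- The logarithm of the `k`-th factor `(1 - q^(k+1)) / (1 - q^(k+1+x)) *
((1 - q^(k+2)) / (1 - q^(k+1)))^x` of the Euler product of the `q`-Gamma function at `x + 1`,
where `q = exp (-h)`. -/
noncomputable def qGammaLogTerm (x : ℂ) (h : ℝ) (k : ℕ) : ℂ :=
  logOneSubExp h (k + 1) - logOneSubExp h (k + 1 + x) +
    x * (logOneSubExp h (k + 2) - logOneSubExp h (k + 1))

theorem norm_qGammaLogTerm_le {x : ℂ} (hx : 0 ≤ x.re) {h : ℝ} (hh : 0 < h) (k : ℕ) :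
    ‖qGammaLogTerm x h k‖ ≤ (‖x‖ ^ 2 + ‖x‖) * (1 / ((k : ℝ) + 1) ^ 2) := by
  have hσ : (0 : ℝ) < k + 1 := by positivity
  have h1 := norm_logOneSubExp_taylor_le hh hσ hx
  have h2 := norm_logOneSubExp_taylor_le hh hσ (d := 1) (by simp)
  push_cast at h1 h2
  rw [add_assoc, one_add_one_eq_two, norm_one, one_pow, mul_one] at h2
  set D : ℂ := h * Complex.exp (-(h * (k + 1))) / (1 - Complex.exp (-(h * (k + 1))))
  have heq : qGammaLogTerm x h k =
      x * (logOneSubExp h (k + 2) - logOneSubExp h (k + 1) - D * 1) -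
        (logOneSubExp h (k + 1 + x) - logOneSubExp h (k + 1) - D * x) := by
    unfold qGammaLogTerm; ring
  rw [heq]
  refine (norm_sub_le _ _).trans ?_
  rw [norm_mul]
  have := mul_le_mul_of_nonneg_left h2 (norm_nonneg x)
  simp only [mul_one] at this ⊢
  linarith

theorem summable_qGammaLogTerm_bound (C : ℝ) :
    Summable fun k : ℕ => C * (1 / ((k : ℝ) + 1) ^ 2) := by
  have := (summable_nat_add_iff 1).2 (Real.summable_one_div_nat_pow.2 one_lt_two)
  simpa using this.mul_left C

theorem summable_qGammaLogTerm {x : ℂ} (hx : 0 ≤ x.re) {h : ℝ} (hh : 0 < h) :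
    Summable (qGammaLogTerm x h) :=
  .of_norm_bounded (summable_qGammaLogTerm_bound _) (norm_qGammaLogTerm_le hx hh)

theorem tendsto_one_sub_exp_div (s : ℂ) :
    Tendsto (fun h : ℝ => (1 - Complex.exp (-(h * s))) / h) (𝓝[>] 0) (𝓝 s) := by
  have h1 : HasDerivAt (fun h : ℝ => 1 - Complex.exp (-((h : ℂ) * s))) s 0 := by
    have := (((hasDerivAt_id (0 : ℝ)).ofReal_comp.mul_const s).neg.cexp).const_sub 1
    simpa using this
  have h2 := (hasDerivAt_iff_tendsto_slope.1 h1).mono_left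
    (nhdsWithin_mono _ fun y (hy : 0 < y) => hy.ne')
  refine h2.congr fun h => ?_
  simp [slope, div_eq_inv_mul]

theorem tendsto_logOneSubExp_sub_log {s : ℂ} (hs : 0 < s.re) :
    Tendsto (fun h : ℝ => logOneSubExp h s - (Real.log h : ℂ)) (𝓝[>] 0)
      (𝓝 (Complex.log s)) := by
  have h1 := (tendsto_one_sub_exp_div s).clog (Or.inl hs)
  refine h1.congr' ?_
  filter_upwards [self_mem_nhdsWithin] with h (hh : 0 < h)
  have := Complex.log_ofReal_mul (inv_pos.2 hh)
    (Complex.slitPlane_ne_zero (one_sub_exp_mem_slitPlane hh hs))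
  rw [div_eq_inv_mul, ← Complex.ofReal_inv, this, logOneSubExp, Real.log_inv]
  push_cast
  ring

theorem tendsto_qGammaLogTerm {x : ℂ} (hx : 0 ≤ x.re) (k : ℕ) :
    Tendsto (fun h => qGammaLogTerm x h k) (𝓝[>] 0)
      (𝓝 (Complex.log (k + 1) - Complex.log (k + 1 + x) +
        x * (Complex.log (k + 2) - Complex.log (k + 1)))) := by
  have hk : (0 : ℝ) ≤ k := by positivity
  have h1 := tendsto_logOneSubExp_sub_log (s := (k : ℂ) + 1) (by simp; linarith)
  have h2 := tendsto_logOneSubExp_sub_log (s := (k : ℂ) + 2) (by simp; linarith)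
  have h3 := tendsto_logOneSubExp_sub_log (s := (k : ℂ) + 1 + x) (by simp; linarith)
  refine ((h1.sub h3).add ((h2.sub h1).const_mul x)).congr fun h => ?_
  unfold qGammaLogTerm
  ring

/-- Euler's product for the Gamma function, in logarithmic form. -/
theorem exp_tsum_euler_Gamma {x : ℂ} (hx : 0 ≤ x.re) (hx0 : x ≠ 0)
    (hsum : Summable fun k : ℕ => Complex.log (k + 1) - Complex.log (k + 1 + x) +
        x * (Complex.log (k + 2) - Complex.log (k + 1))) :
    Complex.exp (∑' k : ℕ, (Complex.log (k + 1) - Complex.log (k + 1 + x) +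
        x * (Complex.log (k + 2) - Complex.log (k + 1)))) = x * Complex.Gamma x := by
  have hne : ∀ k : ℕ, (k : ℂ) + 1 + x ≠ 0 := fun k h => by
    have := congrArg Complex.re h
    simp at this
    linarith [(Nat.cast_nonneg k : (0 : ℝ) ≤ k)]
  have h1 := hsum.hasSum.tendsto_sum_nat.cexp
  have hpart : ∀ N : ℕ, Complex.exp (∑ k ∈ Finset.range N,
      (Complex.log (k + 1) - Complex.log (k + 1 + x) +
        x * (Complex.log (k + 2) - Complex.log (k + 1)))) =
      (N.factorial : ℂ) / (∏ k ∈ Finset.range N, ((k : ℂ) + 1 + x)) *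
        Complex.exp (x * Complex.log (N + 1)) := by
    intro N
    induction N with
    | zero => simp
    | succ n ih =>
      have hn1 : (n : ℂ) + 1 ≠ 0 := Nat.cast_add_one_ne_zero n
      rw [Finset.sum_range_succ, Complex.exp_add, ih, Complex.exp_add, Complex.exp_sub,
        Complex.exp_log hn1, Complex.exp_log (hne n), mul_sub, Complex.exp_sub,
        Finset.prod_range_succ, Nat.factorial_succ]
      have := hne n
      have hp : (∏ k ∈ Finset.range n, ((k : ℂ) + 1 + x)) ≠ 0 :=
        Finset.prod_ne_zero_iff.2 fun k _ => hne k
      have he := Complex.exp_ne_zero (x * Complex.log (n + 1))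
      push_cast
      rw [show (n : ℂ) + 1 + 1 = n + 2 by ring]
      field_simp
  have h2 : Tendsto (fun N : ℕ => x * Complex.GammaSeq x N *
      Complex.exp (x * ((Real.log (N + 1) - Real.log N : ℝ) : ℂ))) atTop
      (𝓝 (x * Complex.Gamma x * Complex.exp (x * ((0 : ℝ) : ℂ)))) :=
    ((Complex.GammaSeq_tendsto_Gamma x).const_mul x).mul
      ((((Complex.continuous_ofReal.tendsto 0).comp
        Real.tendsto_log_nat_add_one_sub_log).const_mul x).cexp)
  rw [Complex.ofReal_zero, mul_zero, Complex.exp_zero, mul_one] at h2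
  refine tendsto_nhds_unique h1 (h2.congr' ?_)
  filter_upwards [eventually_gt_atTop 0] with N hN
  have hN0 : (N : ℂ) ≠ 0 := Nat.cast_ne_zero.2 hN.ne'
  rw [hpart, Complex.GammaSeq, Finset.prod_range_succ', Complex.cpow_def_of_ne_zero hN0]
  have hp : (∏ k ∈ Finset.range N, ((k : ℂ) + 1 + x)) ≠ 0 :=
    Finset.prod_ne_zero_iff.2 fun k _ => hne k
  have hp' : (∏ k ∈ Finset.range N, (x + ((k + 1 : ℕ) : ℂ))) =
      ∏ k ∈ Finset.range N, ((k : ℂ) + 1 + x) :=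
    Finset.prod_congr rfl fun k _ => by push_cast; ring
  have hl1 : ((Real.log (N + 1) : ℝ) : ℂ) = Complex.log (N + 1) := by
    rw [Complex.ofReal_log (by positivity)]; push_cast; rfl
  have hl2 : ((Real.log N : ℝ) : ℂ) = Complex.log N := by
    rw [Complex.ofReal_log (by positivity)]; push_cast; rfl
  rw [hp', Complex.ofReal_sub, hl1, hl2, mul_sub, Complex.exp_sub, mul_comm (Complex.log N)]
  have he := Complex.exp_ne_zero (x * Complex.log N)
  simp only [Nat.cast_zero, add_zero]
  field_simp

theorem tendsto_exp_tsum_qGammaLogTerm {x : ℂ} (hx : 0 ≤ x.re) (hx0 : x ≠ 0) :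
    Tendsto (fun h => Complex.exp (∑' k, qGammaLogTerm x h k)) (𝓝[>] 0)
      (𝓝 (x * Complex.Gamma x)) := by
  have hbound : ∀ᶠ h : ℝ in 𝓝[>] 0, ∀ k,
      ‖qGammaLogTerm x h k‖ ≤ (‖x‖ ^ 2 + ‖x‖) * (1 / ((k : ℝ) + 1) ^ 2) := by
    filter_upwards [self_mem_nhdsWithin] with h hh k using norm_qGammaLogTerm_le hx hh k
  have hS := summable_qGammaLogTerm_bound (‖x‖ ^ 2 + ‖x‖)
  rw [← exp_tsum_euler_Gamma hx hx0]
  · exact (tendsto_tsum_of_dominated_convergence hS (tendsto_qGammaLogTerm hx) hbound).cexp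
  · exact .of_norm_bounded hS fun k => le_of_tendsto (tendsto_qGammaLogTerm hx k).norm
      (hbound.mono fun h hh => hh k)

theorem multipliable_one_sub_exp {h : ℝ} (hh : 0 < h) (s : ℂ) :
    Multipliable fun k : ℕ => 1 - Complex.exp (-(h * (k + s))) := by
  simp_rw [sub_eq_add_neg]
  refine multipliable_one_add_of_summable ?_
  have hgeo : Summable fun k : ℕ => Real.exp (-(h * s.re)) * Real.exp (-h) ^ k :=
    (summable_geometric_of_lt_one (Real.exp_pos _).le
      (Real.exp_lt_one_iff.2 (by linarith))).mul_left _
  refine hgeo.congr fun k => ?_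
  rw [norm_neg, norm_exp_neg_ofReal_mul, ← Real.exp_nat_mul, ← Real.exp_add]
  simp
  ring

/-- The Euler product of the `q`-Gamma function. -/
theorem exp_tsum_qGammaLogTerm_mul {x : ℂ} (hx : 0 ≤ x.re) {h : ℝ} (hh : 0 < h) :
    Complex.exp (∑' k, qGammaLogTerm x h k) *
        ∏' k : ℕ, (1 - Complex.exp (-(h * (k + (1 + x))))) =
      Complex.exp (-(x * logOneSubExp h 1)) * ∏' k : ℕ, (1 - Complex.exp (-(h * (k + 1)))) := by
  have h1 := (summable_qGammaLogTerm hx hh).hasSum.tendsto_sum_nat.cexp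
  have h2 := (multipliable_one_sub_exp hh (1 + x)).tendsto_prod_tprod_nat
  have h3 := (multipliable_one_sub_exp hh 1).tendsto_prod_tprod_nat
  have hk (k : ℕ) : (0 : ℝ) ≤ k := k.cast_nonneg
  have hpart : ∀ N : ℕ, Complex.exp (∑ k ∈ Finset.range N, qGammaLogTerm x h k) *
      ∏ k ∈ Finset.range N, (1 - Complex.exp (-(h * (k + (1 + x))))) =
      Complex.exp (x * logOneSubExp h (N + 1)) * (Complex.exp (-(x * logOneSubExp h 1)) *
        ∏ k ∈ Finset.range N, (1 - Complex.exp (-(h * (k + 1))))) := by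
    intro N
    induction N with
    | zero => simp [← Complex.exp_add]
    | succ n ih =>
      have e1 := exp_logOneSubExp hh (s := n + 1) (by simp; linarith [hk n])
      have e2 := exp_logOneSubExp hh (s := n + 1 + x) (by simp; linarith [hk n])
      have e3 : Complex.exp (qGammaLogTerm x h n) =
          Complex.exp (logOneSubExp h (n + 1)) / Complex.exp (logOneSubExp h (n + 1 + x)) *
          (Complex.exp (x * logOneSubExp h (n + 2)) / Complex.exp (x * logOneSubExp h (n + 1))) := by
        rw [qGammaLogTerm, Complex.exp_add, Complex.exp_sub, mul_sub, Complex.exp_sub]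
      rw [Finset.sum_range_succ, Complex.exp_add, Finset.prod_range_succ, Finset.prod_range_succ,
        mul_mul_mul_comm, ih, e3, ← add_assoc (n : ℂ) 1 x, ← e1, ← e2]
      push_cast
      rw [show (n : ℂ) + 1 + 1 = n + 2 by ring]
      have := Complex.exp_ne_zero (logOneSubExp h (n + 1 + x))
      have := Complex.exp_ne_zero (x * logOneSubExp h (n + 1))
      field_simp
  have h4 : Tendsto (fun N : ℕ => Complex.exp (x * logOneSubExp h (N + 1))) atTop (𝓝 1) := by
    have hexp : Tendsto (fun N : ℕ => Complex.exp (-(h * ((N : ℂ) + 1)))) atTop (𝓝 0) := by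
      rw [tendsto_zero_iff_norm_tendsto_zero]
      have hr : Tendsto (fun N : ℕ => Real.exp (-h) ^ (N + 1)) atTop (𝓝 0) :=
        (tendsto_pow_atTop_nhds_zero_of_lt_one (Real.exp_pos _).le
          (Real.exp_lt_one_iff.2 (by linarith))).comp (tendsto_add_atTop_nat 1)
      refine hr.congr fun N => ?_
      rw [norm_exp_neg_ofReal_mul, ← Real.exp_nat_mul]
      simp
      ring
    have := ((((hexp.const_sub 1).clog (by simp)).const_mul x)).cexp
    simpa [logOneSubExp] using this
  refine tendsto_nhds_unique (h1.mul h2) ?_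
  simp_rw [hpart]
  simpa using h4.mul (h3.const_mul (Complex.exp (-(x * logOneSubExp h 1))))

theorem tendsto_tprod_one_sub_mul_pow (a : ℂ) :
    Tendsto (fun q : ℂ => ∏' n : ℕ, (1 - a * q ^ (n + 1))) (𝓝 0) (𝓝 1) := by
  have := tendsto_tprod_one_add_of_dominated_convergence (𝓕 := 𝓝 0) (g := 0)
    (f := fun (q : ℂ) (n : ℕ) => -(a * q ^ (n + 1)))
    (bound := fun n => ‖a‖ * (1 / 2 : ℝ) ^ (n + 1))
  simp only [Pi.zero_apply, norm_neg, norm_mul, norm_pow, add_zero, tprod_one] at this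
  simp_rw [sub_eq_add_neg]
  refine this (((summable_nat_add_iff 1).2
    (summable_geometric_of_abs_lt_one (by norm_num))).mul_left _)
    (fun k => by simpa using (((continuous_pow (M := ℂ) (k + 1)).tendsto 0).const_mul a).neg) ?_
  filter_upwards [Metric.ball_mem_nhds (0 : ℂ) (by norm_num : (0 : ℝ) < 1 / 2)] with q hq k
  exact mul_le_mul_of_nonneg_left
    (pow_le_pow_left₀ (norm_nonneg _) (mem_ball_zero_iff.mp hq).le _) (norm_nonneg _)

/-- The products in the dual nome `exp (-2π/r)` tend to `1` as `r → 0⁺`. -/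
theorem tendsto_tprod_dual_nome (a : ℂ) :
    Tendsto (fun r : ℝ => ∏' n : ℕ, (1 - a * Complex.exp (-(2 * Real.pi / r)) ^ (n + 1)))
      (𝓝[>] 0) (𝓝 1) := by
  refine (tendsto_tprod_one_sub_mul_pow a).comp ?_
  have h1 : Tendsto (fun r : ℝ => Real.exp (-(2 * Real.pi * r⁻¹))) (𝓝[>] 0) (𝓝 0) :=
    Real.tendsto_exp_neg_atTop_nhds_zero.comp
      (tendsto_inv_nhdsGT_zero.const_mul_atTop (by positivity))
  have h2 := (Complex.continuous_ofReal.tendsto 0).comp h1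
  rw [Complex.ofReal_zero] at h2
  refine h2.congr fun r => ?_
  simp [div_eq_mul_inv]

/-- The inversion formula of the Dedekind eta function on the imaginary axis, as an identity
between infinite products. -/
theorem eta_inversion_imaginary_axis {r : ℝ} (hr : 0 < r) :
    Complex.exp (-(Real.pi / (12 * r))) *
        ∏' n : ℕ, (1 - Complex.exp (-(2 * Real.pi / r)) ^ (n + 1)) =
      (Real.sqrt r : ℂ) * (Complex.exp (-(Real.pi * r / 12)) *
        ∏' n : ℕ, (1 - Complex.exp (-((2 * Real.pi * r : ℝ) * ((n : ℂ) + 1))))) := by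
  have hr0 : (r : ℂ) ≠ 0 := Complex.ofReal_ne_zero.2 hr.ne'
  have h := ModularForm.eta_comp_eq_csqrt_I_inv (x := Complex.I * r)
    (by simpa [UpperHalfPlane.upperHalfPlaneSet] using hr)
  have hs : Complex.sqrt (Complex.I * r) = Complex.sqrt Complex.I * (Real.sqrt r : ℂ) := by
    have hlog : (Real.log (Real.sqrt r) : ℂ) = Real.log r / 2 := by
      rw [Real.log_sqrt hr.le]; push_cast; rfl
    have hexp : (Real.sqrt r : ℂ) = Complex.exp (Real.log r / 2) := by
      rw [← hlog, ← Complex.ofReal_exp, Real.exp_log (Real.sqrt_pos.2 hr)]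
    rw [Complex.sqrt, Complex.sqrt, mul_comm, Complex.cpow_def_of_ne_zero (by simp [hr0]),
      Complex.cpow_def_of_ne_zero Complex.I_ne_zero, Complex.log_ofReal_mul hr Complex.I_ne_zero,
      hexp, ← Complex.exp_add]
    ring_nf
  have hsI : Complex.sqrt Complex.I ≠ 0 := by
    simp [Complex.sqrt]
  simp only [Function.comp_apply, Pi.smul_apply, Pi.mul_apply, smul_eq_mul, hs, ModularForm.eta]
    at h
  rw [mul_assoc, inv_mul_cancel_left₀ hsI] at h
  have hz : -1 / (Complex.I * r) = Complex.I / r := by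
    field_simp; simp
  rw [hz] at h
  convert h using 2
  · rw [Function.Periodic.qParam]
    congr 1
    push_cast
    linear_combination (-(Real.pi / (12 * r))) * Complex.I_sq
  · refine tprod_congr fun n => ?_
    rw [ModularForm.eta_q_eq_pow]
    congr 3
    linear_combination (-2 * Real.pi / r) * Complex.I_sq
  · congr 1
    · rw [Function.Periodic.qParam]
      congr 1
      push_cast
      linear_combination (-Real.pi * r / 12) * Complex.I_sq
    · refine tprod_congr fun n => ?_
      rw [ModularForm.eta_q_eq_cexp]
      congr 2
      push_cast
      linear_combination (-2 * Real.pi * r * (n + 1)) * Complex.I_sq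

theorem br_sq {r : ℝ} (hr : 0 < r) : br r ^ 2 = Complex.I * r := by
  rw [br, mul_pow, ← Complex.exp_nat_mul, ← Complex.ofReal_pow, Real.sq_sqrt hr.le]
  rw [show ((2 : ℕ) : ℂ) * (Real.pi * Complex.I / 4) = Real.pi / 2 * Complex.I by push_cast; ring,
    Complex.exp_pi_div_two_mul_I]

theorem br_ne_zero {r : ℝ} (hr : 0 < r) : br r ≠ 0 := by
  have := Real.sqrt_pos.2 hr
  simp [br, Complex.exp_ne_zero, this.ne']

theorem br_mul_zetaBar {r : ℝ} (hr : 0 < r) :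
    br r * zetaBar (br r) = (Real.sqrt r : ℂ) *
      (Complex.exp (Real.pi * r / 12) * Complex.exp (-(Real.pi / (12 * r)))) := by
  have hr0 : (r : ℂ) ≠ 0 := Complex.ofReal_ne_zero.2 hr.ne'
  rw [zetaBar, inv_pow, br_sq hr, br, mul_right_comm, ← Complex.exp_add, ← Complex.exp_add,
    mul_comm]
  congr 2
  rw [mul_inv, Complex.inv_I]
  field_simp
  linear_combination 4 * (1 - (r : ℂ) ^ 2) * Complex.I_sq

/-- The prefactor of the quantum dilogarithm, expressed through the modular inversion of `η`. -/
theorem br_mul_zetaBar_mul_tprod {r : ℝ} (hr : 0 < r) :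
    br r * zetaBar (br r) * ∏' n : ℕ, (1 - Complex.exp (-(2 * Real.pi / r)) ^ (n + 1)) =
      r * ∏' n : ℕ, (1 - Complex.exp (-((2 * Real.pi * r : ℝ) * ((n : ℂ) + 1)))) := by
  have hsq : (Real.sqrt r : ℂ) * Real.sqrt r = r := by
    rw [← Complex.ofReal_mul, Real.mul_self_sqrt hr.le]
  have hexp : Complex.exp (Real.pi * r / 12) * Complex.exp (-(Real.pi * r / 12)) = 1 := by
    rw [← Complex.exp_add, add_neg_cancel, Complex.exp_zero]
  set M := ∏' n : ℕ, (1 - Complex.exp (-(2 * Real.pi / r)) ^ (n + 1)) with hM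
  set E := ∏' n : ℕ, (1 - Complex.exp (-((2 * Real.pi * r : ℝ) * ((n : ℂ) + 1)))) with hE
  have heta := eta_inversion_imaginary_axis hr
  rw [← hM, ← hE] at heta
  rw [br_mul_zetaBar hr]
  linear_combination (Real.sqrt r : ℂ) * Complex.exp (Real.pi * r / 12) * heta +
    r * E * hexp + Complex.exp (Real.pi * r / 12) * Complex.exp (-(Real.pi * r / 12)) * E * hsq

theorem Gb_br {r : ℝ} (hr : 0 < r) (w : ℝ) :
    Gb (br r) (Complex.I * br r * w) = zetaBar (br r) *
      (∏' n : ℕ, (1 - Complex.exp (-(2 * Real.pi * w)) *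
        Complex.exp (-(2 * Real.pi / r)) ^ (n + 1))) /
      ((1 - Complex.exp (-((2 * Real.pi * r : ℝ) * (Complex.I * w)))) *
        ∏' n : ℕ, (1 - Complex.exp (-((2 * Real.pi * r : ℝ) * (n + (1 + Complex.I * w)))))) := by
  have hb := br_ne_zero hr
  have hbinv : (br r)⁻¹ ^ 2 = -Complex.I / r := by
    rw [inv_pow, br_sq hr, mul_inv, Complex.inv_I, div_eq_mul_inv]
  have hbb : (br r)⁻¹ * br r = 1 := inv_mul_cancel₀ hb
  rw [Gb]
  congr 1
  · congr 1
    refine tprod_congr fun n => ?_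
    rw [← Complex.exp_nat_mul, ← Complex.exp_add]
    congr 2
    push_cast
    linear_combination (2 * Real.pi * Complex.I ^ 2 * w) * hbb
      - 2 * Real.pi * Complex.I * (n + 1) * hbinv
      + (2 * Real.pi * w + 2 * Real.pi * (n + 1) / r) * Complex.I_sq
  · have hfac : ∀ n : ℕ, 1 - Complex.exp (2 * Real.pi * Complex.I * br r *
        (Complex.I * br r * w + n * br r)) =
        1 - Complex.exp (-((2 * Real.pi * r : ℝ) * (n + Complex.I * w))) := fun n => by
      congr 2
      push_cast
      linear_combination (2 * Real.pi * Complex.I * (Complex.I * w + n)) * br_sq hr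
        + 2 * Real.pi * r * (n + Complex.I * w) * Complex.I_sq
    simp_rw [hfac]
    have hm := multipliable_one_sub_exp (h := 2 * Real.pi * r) (by positivity) (1 + Complex.I * w)
    rw [tprod_eq_zero_mul']
    · simp only [Nat.cast_zero, zero_add, Nat.cast_add, Nat.cast_one, add_assoc]
    · simpa only [Nat.cast_add, Nat.cast_one, add_assoc] using hm

theorem two_I_sinh_cpow {r : ℝ} (hr : 0 < r) (x : ℂ) :
    (2 * Complex.I * Complex.sinh ((Real.pi : ℂ) * r)) ^ (-x) =
      Complex.exp (-(x * logOneSubExp (2 * Real.pi * r) 1)) * Complex.exp (-(x * (Real.pi * r))) *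
        Complex.exp (-(x * (Real.pi / 2 * Complex.I))) := by
  have hq : 0 < 1 - Real.exp (-(2 * Real.pi * r)) := by
    have : Real.exp (-(2 * Real.pi * r)) < 1 := Real.exp_lt_one_iff.2 (by
      have : 0 < 2 * Real.pi * r := by positivity
      linarith)
    linarith
  have hs : 2 * Complex.I * Complex.sinh ((Real.pi : ℂ) * r) =
      ((Real.exp (Real.pi * r) * (1 - Real.exp (-(2 * Real.pi * r))) : ℝ) : ℂ) * Complex.I := by
    rw [Complex.sinh, mul_one_sub, ← Real.exp_add,
      show Real.pi * r + -(2 * Real.pi * r) = -(Real.pi * r) by ring]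
    push_cast
    ring
  have hL : logOneSubExp (2 * Real.pi * r) 1 =
      ((Real.log (1 - Real.exp (-(2 * Real.pi * r))) : ℝ) : ℂ) := by
    rw [Complex.ofReal_log hq.le, logOneSubExp]
    push_cast
    rw [mul_one]
  have hpos : 0 < Real.exp (Real.pi * r) * (1 - Real.exp (-(2 * Real.pi * r))) :=
    mul_pos (Real.exp_pos _) hq
  rw [hs, Complex.cpow_def_of_ne_zero
      (mul_ne_zero (Complex.ofReal_ne_zero.2 hpos.ne') Complex.I_ne_zero),
    Complex.log_ofReal_mul hpos Complex.I_ne_zero, Complex.log_I,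
    Real.log_mul (Real.exp_pos _).ne' hq.ne', Real.log_exp, hL, ← Complex.exp_add,
    ← Complex.exp_add]
  push_cast
  ring_nf

/-- Scalar form of the classical limit of the quantum-plane coaction kernel:
for real `w ≠ 0`,
`lim_{r→0⁺} b(r) (2i sinh(πr))^{−iw} G_{b(r)}(i b(r) w) e^{−π Q(r) b(r) w} = (1/2π) Γ(iw) e^{−πw/2}`,
where `Q(r) = b(r) + b(r)⁻¹` and the complex power is principal. -/
theorem stmt10 (w : ℝ) (hw : w ≠ 0) :
    Tendsto
      (fun r : ℝ =>
        br r * (2 * Complex.I * Complex.sinh ((Real.pi : ℂ) * r)) ^ (-(Complex.I * w)) *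
            Gb (br r) (Complex.I * br r * w) *
            Complex.exp (-((Real.pi : ℂ) * (br r + (br r)⁻¹) * br r * w)))
      (𝓝[>] (0 : ℝ))
      (𝓝 (1 / (2 * (Real.pi : ℂ)) * Complex.Gamma (Complex.I * w) *
          Complex.exp (-((Real.pi : ℂ) * w) / 2))) := by
  have hw0 : (w : ℂ) ≠ 0 := Complex.ofReal_ne_zero.2 hw
  have hx0 : Complex.I * (w : ℂ) ≠ 0 := mul_ne_zero Complex.I_ne_zero hw0
  have hx : 0 ≤ (Complex.I * (w : ℂ)).re := by simp
  have hpi : (2 * Real.pi : ℂ) ≠ 0 := by simp [Real.pi_ne_zero]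
  have hscale : Tendsto (fun r : ℝ => 2 * Real.pi * r) (𝓝[>] 0) (𝓝[>] 0) := by
    refine tendsto_nhdsWithin_of_tendsto_nhds_of_eventually_within _ ?_ ?_
    · have : Tendsto (fun r : ℝ => 2 * Real.pi * r) (𝓝 0) (𝓝 (2 * Real.pi * 0)) :=
        tendsto_id.const_mul _
      rw [mul_zero] at this
      exact this.mono_left nhdsWithin_le_nhds
    · filter_upwards [self_mem_nhdsWithin] with r (hr : 0 < r)
      exact Set.mem_Ioi.2 (by positivity)
  have hΓ := (tendsto_exp_tsum_qGammaLogTerm hx hx0).comp hscale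
  have hfirst := ((tendsto_one_sub_exp_div (Complex.I * w)).comp hscale).inv₀ hx0
  have hN := tendsto_tprod_dual_nome (Complex.exp (-(2 * Real.pi * w)))
  have hM := tendsto_tprod_dual_nome 1
  have hexp : Tendsto (fun r : ℝ => Complex.exp (-(2 * (Complex.I * w) * (Real.pi * r))))
      (𝓝[>] 0) (𝓝 1) := by
    have : Continuous fun r : ℝ => Complex.exp (-(2 * (Complex.I * w) * (Real.pi * r))) := by
      fun_prop
    simpa using (this.tendsto 0).mono_left nhdsWithin_le_nhds
  have hlim := (((hfirst.const_mul (1 / (2 * Real.pi : ℂ))).mul hΓ).mul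
    ((hN.div hM one_ne_zero).mul hexp)).mul_const (Complex.exp (-((Real.pi : ℂ) * w) / 2))
  have hval : 1 / (2 * (Real.pi : ℂ)) * (Complex.I * w)⁻¹ *
      (Complex.I * w * Complex.Gamma (Complex.I * w)) * (1 / 1 * 1) *
        Complex.exp (-((Real.pi : ℂ) * w) / 2) =
      1 / (2 * (Real.pi : ℂ)) * Complex.Gamma (Complex.I * w) *
        Complex.exp (-((Real.pi : ℂ) * w) / 2) := by
    field_simp
  rw [hval] at hlim
  refine hlim.congr' ?_
  filter_upwards [self_mem_nhdsWithin, hM.eventually_ne one_ne_zero] with r (hr : 0 < r) hMr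
  have hh : 0 < 2 * Real.pi * r := by positivity
  have hprod := exp_tsum_qGammaLogTerm_mul hx hh
  have hzeta := br_mul_zetaBar_mul_tprod hr
  have hE : ∏' n : ℕ, (1 - Complex.exp (-((2 * Real.pi * r : ℝ) * ((n : ℂ) + 1)))) ≠ 0 := by
    intro h0
    have heta := eta_inversion_imaginary_axis hr
    simp only [one_mul] at hMr
    rw [h0, mul_zero, mul_zero] at heta
    exact mul_ne_zero (Complex.exp_ne_zero _) hMr heta
  have hQ : Complex.exp (-((Real.pi : ℂ) * (br r + (br r)⁻¹) * br r * w)) =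
      Complex.exp (-(Complex.I * w * (Real.pi * r))) * Complex.exp (-(Real.pi * w)) := by
    rw [← Complex.exp_add]
    congr 1
    linear_combination (-(Real.pi : ℂ) * w) * br_sq hr
      - Real.pi * w * (inv_mul_cancel₀ (br_ne_zero hr))
  have he1 : Complex.exp (-(2 * (Complex.I * w) * (Real.pi * r))) =
      Complex.exp (-(Complex.I * w * (Real.pi * r))) *
        Complex.exp (-(Complex.I * w * (Real.pi * r))) := by
    rw [← Complex.exp_add]; ring_nf
  have he2 : Complex.exp (-((Real.pi : ℂ) * w) / 2) =
      Complex.exp (-(Complex.I * w * (Real.pi / 2 * Complex.I))) *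
        Complex.exp (-(Real.pi * w)) := by
    rw [← Complex.exp_add]
    congr 1
    linear_combination (Real.pi * w / 2 : ℂ) * Complex.I_sq
  simp only [Function.comp_apply, Pi.div_apply, one_mul] at hMr ⊢
  rw [Gb_br hr, two_I_sinh_cpow hr, hQ, he1, he2]
  set M := ∏' n : ℕ, (1 - Complex.exp (-(2 * Real.pi / r)) ^ (n + 1))
  set E := ∏' n : ℕ, (1 - Complex.exp (-((2 * Real.pi * r : ℝ) * ((n : ℂ) + 1))))
  set P := ∏' n : ℕ, (1 - Complex.exp (-((2 * Real.pi * r : ℝ) * ((n : ℂ) + (1 + Complex.I * w)))))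
  set N := ∏' n : ℕ, (1 - Complex.exp (-(2 * Real.pi * w)) *
        Complex.exp (-(2 * Real.pi / r)) ^ (n + 1))
  set A := Complex.exp (-(Complex.I * w * logOneSubExp (2 * Real.pi * r) 1))
  set T := Complex.exp (∑' k, qGammaLogTerm (Complex.I * w) (2 * Real.pi * r) k)
  set D := 1 - Complex.exp (-((2 * Real.pi * r : ℝ) * (Complex.I * w)))
  have hP : P ≠ 0 := by
    intro h0
    rw [h0, mul_zero] at hprod
    exact mul_ne_zero (Complex.exp_ne_zero _) hE hprod.symm
  have hT : T = A * E / P := by rw [eq_div_iff hP, hprod]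
  have hbz : br r * zetaBar (br r) = r * E / M := by rw [eq_div_iff hMr, hzeta]
  rw [hT]
  push_cast
  rw [inv_div]
  calc _ = (r * E / M) * A * (N / (D * P)) *
        (Complex.exp (-(Complex.I * w * (Real.pi * r))) *
        Complex.exp (-(Complex.I * w * (Real.pi * r))) *
        (Complex.exp (-(Complex.I * w * (Real.pi / 2 * Complex.I))) *
        Complex.exp (-(Real.pi * w)))) := by
        rw [div_mul_div_comm, one_mul, mul_div_mul_left _ _ hpi]
        ring_nf
    _ = _ := by
        rw [← hbz]
        ring
end

section
/- Let a ∈ ℂ with Re(a) > 0, let c ∈ ℝ with 0 < c < Re(a), and let x > 0 be real. Then (1/2π) ∫_{−∞}^{∞} Γ(c + iτ) Γ(a − c − iτ) x^{−c−iτ} dτ = Γ(a) (1 + x)^{−a}, where the integral converges absolutely and all complex powers are principal. -/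
open Complex MeasureTheory

open Set in
theorem Complex.norm_Gamma_le_Gamma_re {s : ℂ} (hs : 0 < s.re) :
    ‖Complex.Gamma s‖ ≤ Real.Gamma s.re := by
  rw [Complex.Gamma_eq_integral hs, Complex.GammaIntegral, Real.Gamma_eq_integral hs]
  refine (norm_integral_le_integral_norm _).trans_eq
    (setIntegral_congr_fun measurableSet_Ioi fun t ht => ?_)
  rw [norm_mul, Complex.norm_of_nonneg (Real.exp_pos _).le, norm_cpow_eq_rpow_re_of_pos ht,
    sub_re, one_re]

theorem Complex.continuousAt_Gamma_of_re_pos {s : ℂ} (hs : 0 < s.re) :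
    ContinuousAt Complex.Gamma s := by
  refine continuousAt_Gamma s fun m hm => ?_
  have := congrArg re hm
  simp only [neg_re, natCast_re] at this
  linarith [(Nat.cast_nonneg m : (0 : ℝ) ≤ m)]

/-- A quadratic-decay bound for `Γ(s) Γ(a - s)` on vertical lines. -/
theorem Complex.norm_Gamma_mul_Gamma_sub_le {a s : ℂ} (hs : 0 < s.re) (hsa : s.re < a.re) :
    ‖Complex.Gamma s * Complex.Gamma (a - s)‖ ≤
      Real.Gamma (s.re + 2) * Real.Gamma (a.re - s.re) / ‖s‖ ^ 2 := by
  have hs0 : s ≠ 0 := by rintro rfl; simp at hs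
  have hs1 : s + 1 ≠ 0 := by
    intro h
    have := congrArg re h
    simp only [add_re, one_re, zero_re] at this
    linarith
  have h1 : Complex.Gamma (s + 2) = (s + 1) * (s * Complex.Gamma s) := by
    rw [← Gamma_add_one s hs0, ← Gamma_add_one _ hs1]
    ring_nf
  have h2 : ‖s‖ ≤ ‖s + 1‖ := by
    rw [Complex.norm_def, Complex.norm_def]
    refine Real.sqrt_le_sqrt ?_
    simp only [normSq_apply, add_re, one_re, add_im, one_im]
    nlinarith
  have h3 : ‖Complex.Gamma (s + 2)‖ ≤ Real.Gamma (s.re + 2) := by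
    simpa using norm_Gamma_le_Gamma_re (s := s + 2) (by simp; linarith)
  have h4 : ‖Complex.Gamma (a - s)‖ ≤ Real.Gamma (a.re - s.re) := by
    simpa using norm_Gamma_le_Gamma_re (s := a - s) (by simp; linarith)
  rw [le_div_iff₀ (by positivity), norm_mul]
  calc ‖Complex.Gamma s‖ * ‖Complex.Gamma (a - s)‖ * ‖s‖ ^ 2
      = (‖s‖ * (‖s‖ * ‖Complex.Gamma s‖)) * ‖Complex.Gamma (a - s)‖ := by ring
    _ ≤ (‖s + 1‖ * (‖s‖ * ‖Complex.Gamma s‖)) * ‖Complex.Gamma (a - s)‖ := by gcongr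
    _ = ‖Complex.Gamma (s + 2)‖ * ‖Complex.Gamma (a - s)‖ := by rw [h1, norm_mul, norm_mul]
    _ ≤ _ := by
      have := Real.Gamma_pos_of_pos (show 0 < s.re + 2 by linarith)
      gcongr

theorem Complex.verticalIntegrable_Gamma_mul_Gamma_sub {a : ℂ} {c : ℝ} (hc : 0 < c)
    (hca : c < a.re) :
    VerticalIntegrable (fun s => Complex.Gamma s * Complex.Gamma (a - s)) c := by
  have hcont : Continuous fun τ : ℝ =>
      Complex.Gamma (c + τ * I) * Complex.Gamma (a - (c + τ * I)) := by
    refine continuous_iff_continuousAt.2 fun τ => ContinuousAt.mul ?_ ?_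
    · exact (continuousAt_Gamma_of_re_pos (by simpa using hc)).comp
        (f := fun τ : ℝ => (c : ℂ) + τ * I) (by fun_prop)
    · exact (continuousAt_Gamma_of_re_pos (by simpa using hca)).comp
        (f := fun τ : ℝ => a - ((c : ℂ) + τ * I)) (by fun_prop)
  refine ((integrable_inv_one_add_sq.comp_div hc.ne').const_mul
    (Real.Gamma (c + 2) * Real.Gamma (a.re - c) / c ^ 2)).mono' hcont.aestronglyMeasurable
    (Filter.Eventually.of_forall fun τ => ?_)
  have h := norm_Gamma_mul_Gamma_sub_le (a := a) (s := c + τ * I) (by simpa using hc)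
    (by simpa using hca)
  refine h.trans_eq ?_
  have hpos : c ^ 2 + τ ^ 2 ≠ 0 := by positivity
  rw [← Complex.normSq_eq_norm_sq, normSq_apply]
  simp only [add_re, ofReal_re, mul_re, I_re, mul_zero, ofReal_im, I_im, mul_one, sub_self,
    add_zero, add_im, mul_im, zero_add]
  rw [← sq, ← sq]
  field_simp

open Set in
theorem image_div_one_add_Ioi_zero : (fun x : ℝ => x / (1 + x)) '' Ioi 0 = Ioo 0 1 := by
  ext u
  constructor
  · rintro ⟨x, hx, rfl⟩
    have hx : 0 < x := hx
    exact ⟨by positivity, by simp only; rw [div_lt_one (by positivity)]; linarith⟩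
  · rintro ⟨h0, h1⟩
    have h : 0 < 1 - u := by linarith
    refine ⟨u / (1 - u), div_pos h0 h, ?_⟩
    simp only
    field_simp
    ring

open Set in
theorem injOn_div_one_add_Ioi_zero : InjOn (fun x : ℝ => x / (1 + x)) (Ioi 0) := by
  intro x hx y hy h
  have hx : 0 < x := hx
  have hy : 0 < y := hy
  simp only at h
  field_simp at h
  linarith

theorem hasDerivAt_div_one_add {x : ℝ} (hx : 0 < x) :
    HasDerivAt (fun x : ℝ => x / (1 + x)) (1 / (1 + x) ^ 2) x := by
  refine ((hasDerivAt_id' x).fun_div ((hasDerivAt_id' x).const_add 1)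
    (by positivity)).congr_deriv ?_
  ring

/-- The Beta integrand transported along `x ↦ x / (1 + x)`. -/
theorem betaIntegrand_comp_div_one_add (a s : ℂ) {x : ℝ} (hx : 0 < x) :
    |1 / (1 + x) ^ 2| • (((x / (1 + x) : ℝ) : ℂ) ^ (s - 1) *
      (1 - ((x / (1 + x) : ℝ) : ℂ)) ^ (a - s - 1)) =
    (x : ℂ) ^ (s - 1) • ((1 + x : ℝ) : ℂ) ^ (-a) := by
  have h1 : 0 < 1 + x := by positivity
  have h1' : ((1 + x : ℝ) : ℂ) ≠ 0 := ofReal_ne_zero.2 h1.ne'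
  have h2 : 1 - ((x / (1 + x) : ℝ) : ℂ) = (((1 + x)⁻¹ : ℝ) : ℂ) := by
    rw [← ofReal_one, ← ofReal_sub]
    congr 1
    field_simp
    ring
  have h3 (w : ℂ) : (((1 + x)⁻¹ : ℝ) : ℂ) ^ w = ((1 + x : ℝ) : ℂ) ^ (-w) := by
    rw [ofReal_inv, inv_cpow _ _ (by rw [arg_ofReal_of_nonneg h1.le]; exact Real.pi_pos.ne),
      cpow_neg]
  have h4 : ((|1 / (1 + x) ^ 2| : ℝ) : ℂ) = ((1 + x : ℝ) : ℂ) ^ (-2 : ℂ) := by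
    rw [abs_of_pos (by positivity), cpow_neg, cpow_ofNat]
    push_cast
    rw [one_div]
  rw [h2, div_eq_mul_inv x, ofReal_mul x, mul_cpow_ofReal_nonneg hx.le (inv_pos.2 h1).le, h3, h3,
    real_smul, h4, smul_eq_mul, show -a = -2 + -(s - 1) + -(a - s - 1) by ring,
    cpow_add _ _ h1', cpow_add _ _ h1']
  ring

open Set in
theorem mellinConvergent_one_add_cpow_neg {a s : ℂ} (hs : 0 < s.re) (hsa : s.re < a.re) :
    MellinConvergent (fun x : ℝ => ((1 + x : ℝ) : ℂ) ^ (-a)) s := by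
  have h := betaIntegral_convergent hs (v := a - s) (by simpa using hsa)
  rw [intervalIntegrable_iff_integrableOn_Ioo_of_le zero_le_one, ← image_div_one_add_Ioi_zero,
    integrableOn_image_iff_integrableOn_abs_deriv_smul measurableSet_Ioi
      (fun x hx => (hasDerivAt_div_one_add hx).hasDerivWithinAt) injOn_div_one_add_Ioi_zero] at h
  exact h.congr_fun (fun x hx => betaIntegrand_comp_div_one_add a s hx) measurableSet_Ioi

open Set in
theorem mellin_one_add_cpow_neg {a s : ℂ} (hs : 0 < s.re) (hsa : s.re < a.re) :
    mellin (fun x : ℝ => ((1 + x : ℝ) : ℂ) ^ (-a)) s =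
      Complex.Gamma s * Complex.Gamma (a - s) / Complex.Gamma a := by
  have h := betaIntegral_eq_Gamma_mul_div s (a - s) hs (by simpa using hsa)
  rw [add_sub_cancel, betaIntegral, intervalIntegral.integral_of_le zero_le_one,
    integral_Ioc_eq_integral_Ioo, ← image_div_one_add_Ioi_zero,
    integral_image_eq_integral_abs_deriv_smul measurableSet_Ioi
      (fun x hx => (hasDerivAt_div_one_add hx).hasDerivWithinAt) injOn_div_one_add_Ioi_zero] at h
  rw [← h, mellin]
  exact (setIntegral_congr_fun measurableSet_Ioi
    fun x hx => betaIntegrand_comp_div_one_add a s hx).symm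

/-- Mellin–Barnes formula: for `Re a > 0`, `0 < c < Re a` and real `x > 0`,
`(1/2π) ∫_ℝ Γ(c+iτ) Γ(a−c−iτ) x^{−c−iτ} dτ = Γ(a) (1+x)^{−a}`,
the integral being absolutely convergent and all complex powers principal. -/
theorem stmt11 (a : ℂ) (ha : 0 < a.re) (c : ℝ) (hc0 : 0 < c) (hca : c < a.re)
    (x : ℝ) (hx : 0 < x) :
    Integrable (fun τ : ℝ =>
        Complex.Gamma ((c : ℂ) + Complex.I * τ) * Complex.Gamma (a - c - Complex.I * τ) *
          (x : ℂ) ^ (-(c : ℂ) - Complex.I * τ)) ∧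
    (1 / (2 * (Real.pi : ℂ))) *
        ∫ τ : ℝ, Complex.Gamma ((c : ℂ) + Complex.I * τ) *
          Complex.Gamma (a - c - Complex.I * τ) * (x : ℂ) ^ (-(c : ℂ) - Complex.I * τ) =
      Complex.Gamma a * ((1 + x : ℝ) : ℂ) ^ (-a) := by
  have hint := verticalIntegrable_Gamma_mul_Gamma_sub hc0 hca
  have hx0 : (x : ℂ) ≠ 0 := ofReal_ne_zero.2 hx.ne'
  have hGa : Complex.Gamma a ≠ 0 := Gamma_ne_zero_of_re_pos ha
  have hmellin (τ : ℝ) : mellin (fun x : ℝ => ((1 + x : ℝ) : ℂ) ^ (-a)) (c + τ * I) =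
      Complex.Gamma (c + τ * I) * Complex.Gamma (a - (c + τ * I)) / Complex.Gamma a :=
    mellin_one_add_cpow_neg (by simpa using hc0) (by simpa using hca)
  have hrw (τ : ℝ) : Complex.Gamma ((c : ℂ) + I * τ) * Complex.Gamma (a - c - I * τ) *
      (x : ℂ) ^ (-(c : ℂ) - I * τ) =
      (x : ℂ) ^ (-((c : ℂ) + τ * I)) *
        (Complex.Gamma (c + τ * I) * Complex.Gamma (a - (c + τ * I))) := by
    rw [mul_comm I, sub_sub, neg_add', mul_comm]
  simp_rw [hrw]
  constructor
  · refine Integrable.bdd_mul (c := x ^ (-c)) hint ?_ (Filter.Eventually.of_forall fun τ => ?_)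
    · have : Continuous fun τ : ℝ => (x : ℂ) ^ (-((c : ℂ) + τ * I)) :=
        Continuous.const_cpow (by fun_prop) (Or.inl hx0)
      exact this.aestronglyMeasurable
    · rw [norm_cpow_eq_rpow_re_of_pos hx]
      simp
  · have hinv := mellinInv_mellin_eq c (fun x : ℝ => ((1 + x : ℝ) : ℂ) ^ (-a)) hx
      (mellinConvergent_one_add_cpow_neg (by simpa using hc0) (by simpa using hca))
      (by
        rw [VerticalIntegrable]
        simp_rw [hmellin]
        exact hint.div_const _)
      (ContinuousAt.cpow (by fun_prop) continuousAt_const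
        (ofReal_mem_slitPlane.2 (by positivity)))
    rw [← hinv, mellinInv]
    simp_rw [hmellin, smul_eq_mul, mul_div_assoc', integral_div]
    rw [real_smul]
    push_cast
    rw [mul_left_comm, mul_div_cancel₀ _ hGa]
end

section
/- The map Φ : (0,∞)² → (0,∞)² defined by Φ(α, x) = (αx/(α+1), x/(α+1)) is a bijection with inverse (x₁, x₂) ↦ (x₁/x₂, x₁ + x₂), and it preserves the measure μ = (dx₁/x₁)(dx₂/x₂) on (0,∞)² (i.e. the pushforward of μ under Φ is μ). Consequently, the composition operator f ↦ f ∘ Φ is a unitary operator on L²((0,∞)², μ). (This map implements the unitary equivalence R₊ ⊗ R₊ ≅ L²(ℝ₊, dα/α) ⊗ R₊ of ax+b group representations.) -/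
open MeasureTheory

/-- The multiplicatively invariant measure `(dx₁/x₁)(dx₂/x₂)` on `ℝ²`,
concentrated on `(0,∞)²` (the density `ENNReal.ofReal x⁻¹` vanishes for `x ≤ 0`). -/
noncomputable def muHaar2 : Measure (ℝ × ℝ) :=
  ((volume : Measure ℝ).withDensity fun x => ENNReal.ofReal x⁻¹).prod
    ((volume : Measure ℝ).withDensity fun x => ENNReal.ofReal x⁻¹)

/-- `Φ(α, x) = (αx/(α+1), x/(α+1))`. -/
noncomputable def PhiMap (p : ℝ × ℝ) : ℝ × ℝ :=
  (p.1 * p.2 / (p.1 + 1), p.2 / (p.1 + 1))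

/-- `Ψ(x₁, x₂) = (x₁/x₂, x₁ + x₂)`. -/
noncomputable def PsiMap (p : ℝ × ℝ) : ℝ × ℝ :=
  (p.1 / p.2, p.1 + p.2)

/-- The measure `dx/x` is invariant under multiplication by a positive constant. -/
theorem map_mul_left_withDensity_inv {c : ℝ} (hc : 0 < c) :
    Measure.map (fun x => c * x) ((volume : Measure ℝ).withDensity fun x => ENNReal.ofReal x⁻¹) =
      (volume : Measure ℝ).withDensity fun x => ENNReal.ofReal x⁻¹ := by
  have hg : Measurable fun x : ℝ => c * x := by fun_prop
  ext s hs
  rw [Measure.map_apply hg hs, withDensity_apply _ (hg hs), withDensity_apply _ hs]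
  have hdens : ∀ x : ℝ, ENNReal.ofReal x⁻¹ = ENNReal.ofReal c * ENNReal.ofReal (c * x)⁻¹ := by
    intro x
    rw [← ENNReal.ofReal_mul hc.le, mul_inv, mul_inv_cancel_left₀ hc.ne']
  rw [lintegral_congr hdens, ← setLIntegral_map hs (by fun_prop : Measurable fun y : ℝ =>
      ENNReal.ofReal c * ENNReal.ofReal y⁻¹) hg, Real.map_volume_mul_left hc.ne',
    Measure.restrict_smul, lintegral_smul_measure, lintegral_const_mul' _ _ (by simp),
    abs_of_pos (inv_pos.2 hc), smul_eq_mul, ← mul_assoc, ← ENNReal.ofReal_mul (inv_pos.2 hc).le,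
    inv_mul_cancel₀ hc.ne', ENNReal.ofReal_one, one_mul]

theorem ae_pos_withDensity_inv :
    ∀ᵐ x ∂((volume : Measure ℝ).withDensity fun x => ENNReal.ofReal x⁻¹), 0 < x := by
  rw [ae_withDensity_iff (by fun_prop)]
  refine Filter.Eventually.of_forall fun x hx => ?_
  simpa using hx

/-- `(x, y) ↦ (x, c(x) y)` preserves `muHaar2` when `c` is positive on `(0,∞)`. -/
theorem measurePreserving_scale_snd {c : ℝ → ℝ} (hc : Measurable c) (hpos : ∀ x, 0 < x → 0 < c x) :
    MeasurePreserving (fun p : ℝ × ℝ => (p.1, c p.1 * p.2)) muHaar2 muHaar2 :=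
  (MeasurePreserving.id _).skew_product (g := fun x y => c x * y)
    (by unfold Function.uncurry; fun_prop)
    (ae_pos_withDensity_inv.mono fun x hx => map_mul_left_withDensity_inv (hpos x hx))

theorem measurePreserving_PhiMap : MeasurePreserving PhiMap muHaar2 muHaar2 := by
  have hswap : MeasurePreserving Prod.swap muHaar2 muHaar2 := Measure.measurePreserving_swap
  have hdiv := measurePreserving_scale_snd (c := fun x => (x + 1)⁻¹) (by fun_prop)
    fun x hx => by positivity
  have hmul := measurePreserving_scale_snd measurable_id fun x hx => hx
  convert hswap.comp (hmul.comp (hswap.comp hdiv)) using 1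
  ext p <;> simp [PhiMap] <;> ring

theorem PsiMap_PhiMap {p : ℝ × ℝ} (hp : p ∈ Set.Ioi (0 : ℝ) ×ˢ Set.Ioi (0 : ℝ)) :
    PsiMap (PhiMap p) = p := by
  obtain ⟨a, x⟩ := p
  obtain ⟨ha : 0 < a, hx : 0 < x⟩ := hp
  ext <;> simp only [PsiMap, PhiMap] <;> field_simp

theorem PhiMap_PsiMap {p : ℝ × ℝ} (hp : p ∈ Set.Ioi (0 : ℝ) ×ˢ Set.Ioi (0 : ℝ)) :
    PhiMap (PsiMap p) = p := by
  obtain ⟨x, y⟩ := p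
  obtain ⟨hx : 0 < x, hy : 0 < y⟩ := hp
  ext <;> simp only [PsiMap, PhiMap] <;> field_simp

theorem bijOn_PhiMap :
    Set.BijOn PhiMap (Set.Ioi 0 ×ˢ Set.Ioi 0) (Set.Ioi 0 ×ˢ Set.Ioi 0) := by
  refine Set.InvOn.bijOn (f' := PsiMap) ⟨fun _ => PsiMap_PhiMap, fun _ => PhiMap_PsiMap⟩ ?_ ?_
  · rintro ⟨a, x⟩ ⟨ha : 0 < a, hx : 0 < x⟩
    exact ⟨by simp only [PhiMap, Set.mem_Ioi]; positivity,
      by simp only [PhiMap, Set.mem_Ioi]; positivity⟩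
  · rintro ⟨x, y⟩ ⟨hx : 0 < x, hy : 0 < y⟩
    exact ⟨div_pos hx hy, add_pos hx hy⟩

/-- `Φ(α,x) = (αx/(α+1), x/(α+1))` is a measure-preserving bijection of
`((0,∞)², (dx₁/x₁)(dx₂/x₂))` with inverse `(x₁,x₂) ↦ (x₁/x₂, x₁+x₂)`, and composition with `Φ`
preserves the `L²` norm, hence is a unitary operator on `L²((0,∞)², μ)`. -/
theorem stmt13 :
    Set.BijOn PhiMap (Set.Ioi 0 ×ˢ Set.Ioi 0) (Set.Ioi 0 ×ˢ Set.Ioi 0) ∧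
    (∀ p ∈ (Set.Ioi (0:ℝ) ×ˢ Set.Ioi (0:ℝ)), PsiMap (PhiMap p) = p) ∧
    (∀ p ∈ (Set.Ioi (0:ℝ) ×ˢ Set.Ioi (0:ℝ)), PhiMap (PsiMap p) = p) ∧
    Measure.map PhiMap muHaar2 = muHaar2 ∧
    (∀ f : ℝ × ℝ → ℂ, Measurable f →
      ∫⁻ p, ‖f (PhiMap p)‖₊ ^ 2 ∂muHaar2 = ∫⁻ p, ‖f p‖₊ ^ 2 ∂muHaar2) := by
  refine ⟨bijOn_PhiMap, fun _ => PsiMap_PhiMap, fun _ => PhiMap_PsiMap,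
    measurePreserving_PhiMap.map_eq, fun f hf => ?_⟩
  exact measurePreserving_PhiMap.lintegral_comp (f := fun p => (‖f p‖₊ : ENNReal) ^ 2)
    (by fun_prop)
end

section
/- The map Φ(α, x) = (αx/|α−1|, x/|α−1|) is a bijection from ((0,∞)∖{1}) × (0,∞) onto {(x₁, x₂) ∈ (0,∞)² : x₁ ≠ x₂}, with inverse (x₁, x₂) ↦ (x₁/x₂, |x₁ − x₂|), and it preserves the measure μ = (dx₁/x₁)(dx₂/x₂). Consequently, f ↦ f ∘ Φ is a unitary operator from L²({(x₁,x₂) ∈ (0,∞)² : x₁ ≠ x₂}, μ) onto L²(((0,∞)∖{1}) × (0,∞), μ). (This map implements the unitary equivalence R₊ ⊗ R₋ ≅ L²(ℝ_{<1}, dα/α) ⊗ R₋ ⊕ L²(ℝ_{>1}, dα/α) ⊗ R₊ of ax+b group representations.) -/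
open MeasureTheory

/-- `Φ(α, x) = (αx/|α−1|, x/|α−1|)`. -/
noncomputable def PhiMap2 (p : ℝ × ℝ) : ℝ × ℝ :=
  (p.1 * p.2 / |p.1 - 1|, p.2 / |p.1 - 1|)

/-- `Ψ(x₁, x₂) = (x₁/x₂, |x₁ − x₂|)`. -/
noncomputable def PsiMap2 (p : ℝ × ℝ) : ℝ × ℝ :=
  (p.1 / p.2, |p.1 - p.2|)

/-- The domain `((0,∞) ∖ {1}) × (0,∞)`. -/
def domA : Set (ℝ × ℝ) := (Set.Ioi 0 \ {1}) ×ˢ Set.Ioi 0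

/-- The target `{(x₁,x₂) ∈ (0,∞)² : x₁ ≠ x₂}`. -/
def domB : Set (ℝ × ℝ) := {p | p.1 ∈ Set.Ioi (0:ℝ) ∧ p.2 ∈ Set.Ioi (0:ℝ) ∧ p.1 ≠ p.2}

lemma PhiMap2_mem_domB {p : ℝ × ℝ} (hp : p ∈ domA) : PhiMap2 p ∈ domB := by
  obtain ⟨⟨ha, ha1⟩, hx⟩ := hp
  have ha1 : p.1 - 1 ≠ 0 := sub_ne_zero.2 ha1
  have hc : 0 < |p.1 - 1| := abs_pos.2 ha1
  simp only [Set.mem_Ioi] at ha hx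
  refine ⟨div_pos (mul_pos ha hx) hc, div_pos hx hc, fun h => ha1 ?_⟩
  have h := (div_left_inj' hc.ne').1 h
  exact sub_eq_zero.2 (mul_right_cancel₀ hx.ne' (h.trans (one_mul _).symm))

lemma PsiMap2_mem_domA {p : ℝ × ℝ} (hp : p ∈ domB) : PsiMap2 p ∈ domA := by
  obtain ⟨h1, h2, h12⟩ := hp
  refine ⟨⟨(div_pos h1 h2 : 0 < p.1 / p.2), fun h => h12 ?_⟩, abs_pos.2 (sub_ne_zero.2 h12)⟩
  exact (div_eq_one_iff_eq (ne_of_gt h2)).1 h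

lemma PsiMap2_PhiMap2 {p : ℝ × ℝ} (hp : p ∈ domA) : PsiMap2 (PhiMap2 p) = p := by
  obtain ⟨⟨ha, ha1⟩, hx⟩ := hp
  have hc : |p.1 - 1| ≠ 0 := abs_ne_zero.2 (sub_ne_zero.2 ha1)
  simp only [Set.mem_Ioi] at ha hx
  refine Prod.ext ?_ ?_ <;> simp only [PsiMap2, PhiMap2]
  · field_simp
  · rw [← sub_div, ← sub_one_mul, abs_div, abs_abs, abs_mul, abs_of_pos hx]
    field_simp

lemma PhiMap2_PsiMap2 {p : ℝ × ℝ} (hp : p ∈ domB) : PhiMap2 (PsiMap2 p) = p := by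
  obtain ⟨h1, h2, h12⟩ := hp
  have hc : |p.1 - p.2| ≠ 0 := abs_ne_zero.2 (sub_ne_zero.2 h12)
  simp only [Set.mem_Ioi] at h1 h2
  have h : |p.1 / p.2 - 1| = |p.1 - p.2| / p.2 := by
    rw [div_sub_one h2.ne', abs_div, abs_of_pos h2]
  refine Prod.ext ?_ ?_ <;> simp only [PsiMap2, PhiMap2, h] <;> field_simp

lemma bijOn_PhiMap2 : Set.BijOn PhiMap2 domA domB :=
  Set.InvOn.bijOn ⟨fun _ => PsiMap2_PhiMap2, fun _ => PhiMap2_PsiMap2⟩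
    (fun _ => PhiMap2_mem_domB) (fun _ => PsiMap2_mem_domA)

lemma measurable_PhiMap2 : Measurable PhiMap2 := by
  have h : Measurable fun p : ℝ × ℝ => |p.1 - 1| := by fun_prop
  exact ((measurable_fst.mul measurable_snd).div h).prodMk (measurable_snd.div h)

lemma measurableSet_domA : MeasurableSet domA :=
  (measurableSet_Ioi.diff (measurableSet_singleton 1)).prod measurableSet_Ioi

lemma measurableSet_domB : MeasurableSet domB :=
  (measurable_fst measurableSet_Ioi).inter ((measurable_snd measurableSet_Ioi).inter
    (measurableSet_eq_fun measurable_fst measurable_snd).compl)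

/-- The Fréchet derivative of `PhiMap2` away from `α = 1`. -/
noncomputable def fderivPhiMap2 (p : ℝ × ℝ) : ℝ × ℝ →L[ℝ] ℝ × ℝ :=
  (Matrix.toLin (Module.Basis.finTwoProd ℝ) (Module.Basis.finTwoProd ℝ)
    !![-p.2 / ((p.1 - 1) * |p.1 - 1|), p.1 / |p.1 - 1|;
       -p.2 / ((p.1 - 1) * |p.1 - 1|), 1 / |p.1 - 1|]).toContinuousLinearMap

lemma det_fderivPhiMap2 {p : ℝ × ℝ} (hp : p.1 ≠ 1) :
    (fderivPhiMap2 p).det = p.2 / |p.1 - 1| ^ 2 := by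
  have h : p.1 - 1 ≠ 0 := sub_ne_zero.2 hp
  have hc : |p.1 - 1| ≠ 0 := abs_ne_zero.2 h
  simp only [fderivPhiMap2, LinearMap.det_toContinuousLinearMap, LinearMap.det_toLin,
    Matrix.det_fin_two_of]
  field_simp
  ring

lemma hasFDerivAt_PhiMap2 {p : ℝ × ℝ} (hp : p.1 ≠ 1) :
    HasFDerivAt PhiMap2 (fderivPhiMap2 p) p := by
  have h : p.1 - 1 ≠ 0 := sub_ne_zero.2 hp
  have hc : |p.1 - 1| ≠ 0 := abs_ne_zero.2 h
  have h1 : HasFDerivAt (fun q : ℝ × ℝ => q.1) (ContinuousLinearMap.fst ℝ ℝ ℝ) p := hasFDerivAt_fst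
  have h2 : HasFDerivAt (fun q : ℝ × ℝ => q.2) (ContinuousLinearMap.snd ℝ ℝ ℝ) p := hasFDerivAt_snd
  have habs := (hasDerivAt_abs h).comp_hasFDerivAt p (h1.sub_const 1)
  have hinv := (hasDerivAt_inv hc).comp_hasFDerivAt p habs
  have hΦ := ((h1.mul h2).mul hinv).prodMk (h2.mul hinv)
  have hs : ((SignType.sign (p.1 - 1) : SignType) : ℝ) = |p.1 - 1| / (p.1 - 1) := by
    rw [eq_div_iff h, sign_mul_self]
  have hsq : |p.1 - 1| ^ 2 = (p.1 - 1) ^ 2 := sq_abs _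
  refine hΦ.congr_fderiv ?_
  refine ContinuousLinearMap.ext fun v => Prod.ext ?_ ?_
  · simp [fderivPhiMap2, Matrix.toLin_finTwoProd_apply, hs]
    field_simp
    simp only [hsq]
    ring
  · simp [fderivPhiMap2, Matrix.toLin_finTwoProd_apply, hs]
    field_simp
    simp only [hsq]

lemma muHaar2_eq_withDensity : muHaar2 = (volume : Measure (ℝ × ℝ)).withDensity
    fun p => ENNReal.ofReal p.1⁻¹ * ENNReal.ofReal p.2⁻¹ := by
  rw [muHaar2, prod_withDensity (by fun_prop) (by fun_prop), Measure.volume_eq_prod]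

lemma jacobian_mul_density {p : ℝ × ℝ} (hp : p ∈ domA) :
    ENNReal.ofReal |(fderivPhiMap2 p).det| *
      (ENNReal.ofReal (PhiMap2 p).1⁻¹ * ENNReal.ofReal (PhiMap2 p).2⁻¹) =
    ENNReal.ofReal p.1⁻¹ * ENNReal.ofReal p.2⁻¹ := by
  obtain ⟨⟨ha, ha1⟩, hx⟩ := hp
  simp only [Set.mem_Ioi] at ha hx
  have hc : 0 < |p.1 - 1| := abs_pos.2 (sub_ne_zero.2 ha1)
  rw [det_fderivPhiMap2 ha1, abs_of_pos (by positivity)]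
  simp only [PhiMap2]
  rw [← ENNReal.ofReal_mul (by positivity), ← ENNReal.ofReal_mul (by positivity),
    ← ENNReal.ofReal_mul (by positivity)]
  congr 1
  field_simp

lemma map_PhiMap2_restrict :
    Measure.map PhiMap2 (muHaar2.restrict domA) = muHaar2.restrict domB := by
  have hd : Measurable fun p : ℝ × ℝ => ENNReal.ofReal p.1⁻¹ * ENNReal.ofReal p.2⁻¹ := by
    fun_prop
  refine Measure.ext_of_lintegral _ fun f hf => ?_
  rw [lintegral_map hf measurable_PhiMap2, muHaar2_eq_withDensity,
    restrict_withDensity measurableSet_domA, restrict_withDensity measurableSet_domB,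
    lintegral_withDensity_eq_lintegral_mul _ hd (g := fun p => f (PhiMap2 p))
      (hf.comp measurable_PhiMap2),
    lintegral_withDensity_eq_lintegral_mul _ hd hf, ← bijOn_PhiMap2.image_eq,
    lintegral_image_eq_lintegral_abs_det_fderiv_mul volume measurableSet_domA
      (fun p hp => (hasFDerivAt_PhiMap2 hp.1.2).hasFDerivWithinAt) bijOn_PhiMap2.injOn]
  refine setLIntegral_congr_fun measurableSet_domA fun p hp => ?_
  simp only [Pi.mul_apply]
  rw [← mul_assoc, jacobian_mul_density hp]

/-- `Φ(α,x) = (αx/|α−1|, x/|α−1|)` is a measure-preserving bijection from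
`((0,∞)∖{1}) × (0,∞)` onto `{(x₁,x₂) ∈ (0,∞)² : x₁ ≠ x₂}` for `μ = (dx₁/x₁)(dx₂/x₂)`,
with inverse `(x₁,x₂) ↦ (x₁/x₂, |x₁−x₂|)`, and composition with `Φ` preserves the `L²` norm,
hence gives a unitary `L²(domB, μ) → L²(domA, μ)`. -/
theorem stmt14 :
    Set.BijOn PhiMap2 domA domB ∧
    (∀ p ∈ domA, PsiMap2 (PhiMap2 p) = p) ∧
    (∀ p ∈ domB, PhiMap2 (PsiMap2 p) = p) ∧
    Measure.map PhiMap2 (muHaar2.restrict domA) = muHaar2.restrict domB ∧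
    (∀ f : ℝ × ℝ → ℂ, Measurable f →
      ∫⁻ p in domA, ‖f (PhiMap2 p)‖₊ ^ 2 ∂muHaar2 = ∫⁻ p in domB, ‖f p‖₊ ^ 2 ∂muHaar2) := by
  refine ⟨bijOn_PhiMap2, fun _ => PsiMap2_PhiMap2, fun _ => PhiMap2_PsiMap2,
    map_PhiMap2_restrict, fun f hf => ?_⟩
  rw [← map_PhiMap2_restrict, lintegral_map (by fun_prop) measurable_PhiMap2]
end

section
/- The space 𝒲 is dense in L²(ℝ): the ℂ-linear span of the functions x ↦ e^{−Ax² + Bx} P(x), for A > 0 real, B ∈ ℂ and P a complex polynomial, is dense in the complex Hilbert space L²(ℝ). -/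
open MeasureTheory

/-- The space `𝒲`: finite ℂ-linear combinations of functions `x ↦ e^{−Ax²+Bx} P(x)`
with `A > 0` real, `B ∈ ℂ` and `P` a complex polynomial. -/
noncomputable def Wspace : Set (ℝ → ℂ) :=
  (Submodule.span ℂ {f : ℝ → ℂ | ∃ A : ℝ, ∃ B : ℂ, ∃ P : Polynomial ℂ, 0 < A ∧
    f = fun x : ℝ => Complex.exp (-(A : ℂ) * (x : ℂ) ^ 2 + B * x) * P.eval (x : ℂ)} :
      Set (ℝ → ℂ))

open scoped FourierTransform SchwartzMap ContDiff

/-- An integrable function whose Fourier transform vanishes identically is zero almost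
everywhere. -/
theorem ae_eq_zero_of_fourier_eq_zero {h : ℝ → ℂ} (hh : Integrable h)
    (hF : ∀ w, 𝓕 h w = 0) : ∀ᵐ x : ℝ, h x = 0 := by
  refine ae_eq_zero_of_integral_contDiff_smul_eq_zero hh.locallyIntegrable fun φ hφ hφc ↦ ?_
  have hc : HasCompactSupport (fun x ↦ (φ x : ℂ)) :=
    hφc.comp_left (g := fun r : ℝ ↦ (r : ℂ)) Complex.ofReal_zero
  let ψ : 𝓢(ℝ, ℂ) := hc.toSchwartzMap (Complex.ofRealCLM.contDiff.comp hφ)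
  have hψ : 𝓕 ((𝓕⁻ ψ : 𝓢(ℝ, ℂ)) : ℝ → ℂ) = ψ := by
    rw [← SchwartzMap.fourier_coe, FourierTransform.fourier_fourierInv_eq]
  have key := VectorFourier.integral_fourierIntegral_smul_eq_flip (L := innerₗ ℝ)
    (μ := volume) (ν := volume) Real.continuous_fourierChar
    (by fun_prop) hh (𝓕⁻ ψ : 𝓢(ℝ, ℂ)).integrable
  rw [flip_innerₗ] at key
  change ∫ w, 𝓕 h w • (𝓕⁻ ψ : 𝓢(ℝ, ℂ)) w =
    ∫ x, h x • 𝓕 ((𝓕⁻ ψ : 𝓢(ℝ, ℂ)) : ℝ → ℂ) x at key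
  simp only [hF, hψ, zero_smul, integral_zero] at key
  rw [key]
  refine integral_congr_ae (.of_forall fun x ↦ ?_)
  change φ x • h x = h x • (φ x : ℂ)
  rw [Complex.real_smul, smul_eq_mul, mul_comm]

/-- The modulated Gaussian `x ↦ e^{-x² + 2πiwx}`. -/
noncomputable def modulatedGaussian (w x : ℝ) : ℂ :=
  Complex.exp (-((1 : ℝ) : ℂ) * (x : ℂ) ^ 2 + (2 * Real.pi * w * Complex.I) * x)

theorem modulatedGaussian_mem_Wspace (w : ℝ) : modulatedGaussian w ∈ Wspace :=
  Submodule.subset_span ⟨1, 2 * Real.pi * w * Complex.I, 1, one_pos, by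
    ext x; simp [modulatedGaussian]⟩

theorem memLp_modulatedGaussian (w : ℝ) : MemLp (modulatedGaussian w) 2 := by
  have hc : Continuous (modulatedGaussian w) := by
    unfold modulatedGaussian
    fun_prop
  rw [memLp_two_iff_integrable_sq_norm hc.aestronglyMeasurable]
  refine (integrable_exp_neg_mul_sq two_pos).congr (.of_forall fun x ↦ ?_)
  simp [modulatedGaussian, Complex.norm_exp, ← Real.exp_nat_mul, ← Complex.ofReal_pow]

theorem inner_modulatedGaussian (w x : ℝ) (z : ℂ) :
    inner ℂ (modulatedGaussian w x) z =
      Complex.exp (↑(-2 * Real.pi * x * w) * Complex.I) • (z * modulatedGaussian 0 x) := by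
  have hconj : (starRingEnd ℂ) (modulatedGaussian w x) =
      Complex.exp (↑(-2 * Real.pi * x * w) * Complex.I) * modulatedGaussian 0 x := by
    simp only [modulatedGaussian, ← Complex.exp_conj, ← Complex.exp_add]
    congr 1
    simp [Complex.conj_ofNat]
    ring
  rw [RCLike.inner_apply, hconj, smul_eq_mul]
  ring

/-- The elements of `L²(ℝ)` with a representative in `𝒲`, as a submodule. -/
noncomputable def WspaceLp : Submodule ℂ (Lp ℂ 2 (volume : Measure ℝ)) where
  carrier := {g | ∃ f ∈ Wspace, ∀ᵐ x : ℝ, g x = f x}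
  add_mem' := by
    rintro a b ⟨f, hf, haf⟩ ⟨g, hg, hbg⟩
    refine ⟨f + g, Submodule.add_mem _ hf hg, ?_⟩
    filter_upwards [haf, hbg, Lp.coeFn_add a b] with x h1 h2 h3
    rw [h3, Pi.add_apply, Pi.add_apply, h1, h2]
  zero_mem' := ⟨0, Submodule.zero_mem _, Lp.coeFn_zero ℂ 2 volume⟩
  smul_mem' := by
    rintro c a ⟨f, hf, haf⟩
    refine ⟨c • f, Submodule.smul_mem _ c hf, ?_⟩
    filter_upwards [haf, Lp.coeFn_smul c a] with x h1 h2
    simp [h1, h2]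

theorem orthogonal_WspaceLp : WspaceLpᗮ = ⊥ := by
  refine (Submodule.eq_bot_iff _).2 fun g hg ↦ ?_
  have hint : Integrable fun x ↦ g x * modulatedGaussian 0 x :=
    (Lp.memLp g).integrable_mul (memLp_modulatedGaussian 0)
  have hF (w : ℝ) : 𝓕 (fun x ↦ g x * modulatedGaussian 0 x) w = 0 := by
    have hmem : (memLp_modulatedGaussian w).toLp ∈ WspaceLp :=
      ⟨_, modulatedGaussian_mem_Wspace w, (memLp_modulatedGaussian w).coeFn_toLp⟩
    rw [Real.fourier_real_eq_integral_exp_smul, ← hg _ hmem, L2.inner_def]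
    refine integral_congr_ae ?_
    filter_upwards [(memLp_modulatedGaussian w).coeFn_toLp] with x hx
    rw [hx, inner_modulatedGaussian]
  rw [Lp.eq_zero_iff_ae_eq_zero]
  filter_upwards [ae_eq_zero_of_fourier_eq_zero hint hF] with x hx
  exact (mul_eq_zero.1 hx).resolve_right (Complex.exp_ne_zero _)

/-- `𝒲` is dense in `L²(ℝ)`: the set of elements of `L²(ℝ)` admitting a representative
in `𝒲` is dense. -/
theorem stmt16 :
    Dense {g : Lp ℂ 2 (volume : Measure ℝ) | ∃ f ∈ Wspace, ∀ᵐ x : ℝ, g x = f x} :=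
  (Submodule.dense_iff_topologicalClosure_eq_top (s := WspaceLp)).2
    (Submodule.topologicalClosure_eq_top_iff.2 orthogonal_WspaceLp)
end

section
/- Let β ∈ ℝ and let f be a locally integrable function on (0,∞) with f(x) = O(x^{−β+ε}) as x → ∞ for every ε > 0. Suppose there exist N ≥ 0, complex numbers A₀, …, A_N, complex exponents a₀, …, a_N with −β < Re(a₀) ≤ … ≤ Re(a_N), and a real number c > Re(a_N) such that f(x) − Σ_{k=0}^N A_k x^{a_k} = O(x^c) as x → 0⁺. Then the Mellin transform 𝓜f(s) is holomorphic on the strip {−Re(a₀) < Re(s) < β}, and the function s ↦ 𝓜f(s) − Σ_{k=0}^N A_k/(s + a_k) extends to a holomorphic function on the larger strip {−c < Re(s) < β}; in particular 𝓜f continues meromorphically to {−c < Re(s) < β} with (at most) simple poles at s = −a_k of residue A_k. -/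
open MeasureTheory Filter Topology Asymptotics

/-- Restricting a locally integrable function to a measurable subset preserves local
integrability. -/
theorem locallyIntegrableOn_indicator {X E : Type*} [MeasurableSpace X] [TopologicalSpace X]
    [NormedAddCommGroup E] {μ : Measure X} {f : X → E} {s t : Set X}
    (hf : LocallyIntegrableOn f s μ) (ht : MeasurableSet t) :
    LocallyIntegrableOn (t.indicator f) s μ := fun x hx => by
  obtain ⟨u, hu, hfu⟩ := hf x hx
  exact ⟨u, hu, hfu.indicator ht⟩

theorem hasMellin_finsetSum {ι E : Type*} [NormedAddCommGroup E] [NormedSpace ℂ E]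
    (u : Finset ι) {f : ι → ℝ → E} {m : ι → E} {s : ℂ} (h : ∀ i ∈ u, HasMellin (f i) s (m i)) :
    HasMellin (fun t => ∑ i ∈ u, f i t) s (∑ i ∈ u, m i) := by
  constructor
  · simp only [MellinConvergent, Finset.smul_sum]
    exact integrable_finsetSum u fun i hi => (h i hi).1
  · simp only [mellin, Finset.smul_sum]
    rw [integral_finsetSum u fun i hi => (h i hi).1]
    exact Finset.sum_congr rfl fun i hi => (h i hi).2

theorem continuousOn_ofReal_cpow_const_Ioi (a : ℂ) :
    ContinuousOn (fun x : ℝ => (x : ℂ) ^ a) (Set.Ioi 0) := fun _ hx =>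
  (Complex.continuousAt_ofReal_cpow_const _ _ (Or.inr (ne_of_gt hx))).continuousWithinAt

/-- Near `0⁺`, larger powers are dominated by smaller ones. -/
theorem isBigO_rpow_nhdsGT_zero_of_le {b c : ℝ} (h : b ≤ c) :
    (fun x : ℝ => x ^ c) =O[𝓝[>] (0 : ℝ)] fun x : ℝ => x ^ b := by
  refine IsBigO.of_bound 1 ?_
  filter_upwards [Ioo_mem_nhdsGT (zero_lt_one' ℝ)] with x hx
  rw [one_mul, Real.norm_of_nonneg (Real.rpow_nonneg hx.1.le _),
    Real.norm_of_nonneg (Real.rpow_nonneg hx.1.le _)]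
  exact Real.rpow_le_rpow_of_exponent_ge hx.1 hx.2.le h

theorem isBigO_cpow_nhdsGT_zero_of_le {a : ℂ} {b : ℝ} (h : b ≤ a.re) :
    (fun x : ℝ => (x : ℂ) ^ a) =O[𝓝[>] (0 : ℝ)] fun x : ℝ => x ^ b := by
  refine IsBigO.trans (IsBigO.of_bound 1 ?_) (isBigO_rpow_nhdsGT_zero_of_le h)
  filter_upwards [self_mem_nhdsWithin] with x hx
  rw [one_mul, Complex.norm_cpow_eq_rpow_re_of_pos hx,
    Real.norm_of_nonneg (Real.rpow_nonneg (le_of_lt hx) _)]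

/-- Analytic continuation of the Mellin transform. Let `f` be locally integrable on `(0,∞)`
with `f(x) = O(x^{−β+ε})` as `x → ∞` for every `ε > 0`. Suppose there are complex numbers
`A₀, …, A_N` and exponents `a₀, …, a_N` with `−β < Re a₀`, `Re a_k` nondecreasing, and a real
`c > Re a_N` such that `f(x) − Σ A_k x^{a_k} = O(x^c)` as `x → 0⁺`. Then the Mellin transform
`𝓜f(s) = ∫₀^∞ x^{s−1} f(x) dx` converges and is holomorphic on `{−Re a₀ < Re s < β}`, and
`𝓜f(s) − Σ A_k/(s + a_k)` extends holomorphically to `{−c < Re s < β}`; i.e. `𝓜f` continues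
meromorphically with at most simple poles at `s = −a_k` of residue `A_k`. -/
theorem stmt19 (β : ℝ) (f : ℝ → ℂ)
    (hloc : LocallyIntegrableOn f (Set.Ioi 0))
    (hinf : ∀ ε : ℝ, 0 < ε → f =O[atTop] fun x : ℝ => x ^ (-β + ε))
    (N : ℕ) (A : Fin (N + 1) → ℂ) (a : Fin (N + 1) → ℂ)
    (ha0 : -β < (a 0).re)
    (hmono : Monotone fun k => (a k).re)
    (c : ℝ) (hc : (a (Fin.last N)).re < c)
    (h0 : (fun x : ℝ => f x - ∑ k, A k * (x : ℂ) ^ (a k)) =O[𝓝[>] (0 : ℝ)]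
      fun x : ℝ => x ^ c) :
    (∀ s : ℂ, -(a 0).re < s.re → s.re < β →
      IntegrableOn (fun x : ℝ => (x : ℂ) ^ (s - 1) * f x) (Set.Ioi 0)) ∧
    DifferentiableOn ℂ (fun s : ℂ => ∫ x in Set.Ioi (0 : ℝ), (x : ℂ) ^ (s - 1) * f x)
      {s : ℂ | -(a 0).re < s.re ∧ s.re < β} ∧
    ∃ F : ℂ → ℂ, DifferentiableOn ℂ F {s : ℂ | -c < s.re ∧ s.re < β} ∧
      ∀ s : ℂ, -(a 0).re < s.re → s.re < β →
        F s = (∫ x in Set.Ioi (0 : ℝ), (x : ℂ) ^ (s - 1) * f x) - ∑ k, A k / (s + a k) := by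
  have hre : ∀ k, (a 0).re ≤ (a k).re := fun k => hmono (Fin.zero_le k)
  have hac : (a 0).re ≤ c := (hre _).trans hc.le
  have htop : ∀ r, r < β → f =O[atTop] fun x : ℝ => x ^ (-r) := fun r hr => by
    simpa [← add_sub_assoc] using hinf (β - r) (sub_pos.2 hr)
  have hbot : f =O[𝓝[>] (0 : ℝ)] fun x : ℝ => x ^ (-(-(a 0).re)) := by
    rw [neg_neg]
    have hsum : (fun x : ℝ => ∑ k, A k * (x : ℂ) ^ a k) =O[𝓝[>] (0 : ℝ)]
        fun x : ℝ => x ^ (a 0).re :=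
      IsBigO.fun_sum fun k _ => (isBigO_cpow_nhdsGT_zero_of_le (hre k)).const_mul_left (A k)
    simpa using (h0.trans (isBigO_rpow_nhdsGT_zero_of_le hac)).add hsum
  have hconv : ∀ s : ℂ, -(a 0).re < s.re → s.re < β → MellinConvergent f s := fun s h₁ h₂ => by
    obtain ⟨r, hr₁, hr₂⟩ := exists_between h₂
    exact mellinConvergent_of_isBigO_rpow hloc (htop r hr₂) hr₁ hbot h₁
  refine ⟨hconv, fun s hs => ?_, ?_⟩
  · obtain ⟨r, hr₁, hr₂⟩ := exists_between hs.2
    exact (mellin_differentiableAt_of_isBigO_rpow hloc (htop r hr₂) hr₁ hbot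
      hs.1).differentiableWithinAt
  -- Subtract the asymptotic expansion at `0`, truncated to `(0, 1]`.
  set p : ℝ → ℂ := fun x => ∑ k, A k * (x : ℂ) ^ a k with hp
  set P : ℝ → ℂ := (Set.Ioc 0 1).indicator p with hP
  have hPloc : LocallyIntegrableOn P (Set.Ioi 0) := by
    refine locallyIntegrableOn_indicator (ContinuousOn.locallyIntegrableOn ?_ measurableSet_Ioi)
      measurableSet_Ioc
    exact continuousOn_finsetSum _ fun k _ =>
      continuousOn_const.mul (continuousOn_ofReal_cpow_const_Ioi (a k))
  have hPmellin : ∀ s : ℂ, -(a 0).re < s.re → HasMellin P s (∑ k, A k / (s + a k)) := by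
    intro s hs
    have hterm : ∀ k ∈ Finset.univ, HasMellin
        (fun x : ℝ => A k • (Set.Ioc 0 1).indicator (fun t : ℝ => (t : ℂ) ^ a k) x) s
        (A k / (s + a k)) := fun k _ => by
      have hk := hasMellin_cpow_Ioc (a k) (s := s) (by linarith [hre k])
      simpa [hk.2, div_eq_mul_inv] using hasMellin_const_smul hk.1 (A k)
    have hPsum : P = fun x : ℝ =>
        ∑ k, A k • (Set.Ioc 0 1).indicator (fun t : ℝ => (t : ℂ) ^ a k) x := by
      funext x
      by_cases hx : x ∈ Set.Ioc (0 : ℝ) 1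
      · simp only [hP, hp, Set.indicator_of_mem hx, smul_eq_mul]
      · simp only [hP, Set.indicator_of_notMem hx, smul_zero, Finset.sum_const_zero]
    rw [hPsum]
    exact hasMellin_finsetSum Finset.univ hterm
  have hgtop : ∀ r, r < β → (f - P) =O[atTop] fun x : ℝ => x ^ (-r) := fun r hr => by
    refine (htop r hr).congr' ?_ EventuallyEq.rfl
    filter_upwards [eventually_gt_atTop 1] with x hx
    simp [hP, hx]
  have hgbot : (f - P) =O[𝓝[>] (0 : ℝ)] fun x : ℝ => x ^ (-(-c)) := by
    rw [neg_neg]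
    refine h0.congr' ?_ EventuallyEq.rfl
    filter_upwards [Ioc_mem_nhdsGT (zero_lt_one' ℝ)] with x hx
    simp [hP, hp, hx]
  refine ⟨mellin (f - P), fun s hs => ?_, fun s h₁ h₂ => ?_⟩
  · obtain ⟨r, hr₁, hr₂⟩ := exists_between hs.2
    exact (mellin_differentiableAt_of_isBigO_rpow (hloc.sub hPloc) (hgtop r hr₂) hr₁ hgbot
      hs.1).differentiableWithinAt
  · have hPs := hPmellin s h₁
    rw [← hPs.2]
    exact (hasMellin_sub (hconv s h₁ h₂) hPs.1).2
end
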